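/- Let F be a union-closed family on n elements with m sets, and let A, B ∈ F be distinct sets both of level i ≥ 2. Then the tents T(A) and T(B) have at most one common member, i.e., |T(A) ∩ T(B)| ≤ 1. -/

import Mathlib

open Finset

/-- The minimal members of a family of finite sets: those `A` such that no
member `B ≠ A` satisfies `B ⊆ A`. -/
def minimalSets (G : Finset (Finset ℕ)) : Finset (Finset ℕ) :=
  G.filter fun A => ∀ B ∈ G, B ≠ A → ¬ B ⊆ A

/-- The family remaining after removing the first `i` layers of the height
decomposition. -/
def rest (F : Finset (Finset ℕ)) : ℕ → Finset (Finset ℕ)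
  | 0 => F
  | i + 1 => rest F i \ minimalSets (rest F i)

/-- The `i`-th layer `π_i` of the height decomposition (meaningful for `i ≥ 1`):
`π_{i+1}` is the family of minimal members of `F \ (π₁ ∪ ⋯ ∪ π_i)`. -/
def layer (F : Finset (Finset ℕ)) : ℕ → Finset (Finset ℕ)
  | 0 => ∅
  | i + 1 => minimalSets (rest F i)

/-- The height number `H(F)`: the least `H` with `F = π₁ ∪ ⋯ ∪ π_H`,
equivalently the least `H` with `rest F H = ∅`. -/
noncomputable def height (F : Finset (Finset ℕ)) : ℕ :=
  sInf {H : ℕ | rest F H = ∅}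

/-- `F` is a union-closed family on `n` elements with `m` sets: a finite family
of `m` distinct nonempty finite sets whose union is `{1, …, n}`, closed under
unions. -/
def IsUC (F : Finset (Finset ℕ)) (n m : ℕ) : Prop :=
  F.Nonempty ∧ F.card = m ∧ (∀ A ∈ F, A.Nonempty) ∧
    F.sup id = Finset.Icc 1 n ∧ ∀ A ∈ F, ∀ B ∈ F, A ∪ B ∈ F

/-- The tent `T(A)` of a set `A` of level `i ≥ 2`: the family
`{A} ∪ {B ∈ π_{i−1} : B ⊆ A}`. -/
def tent (F : Finset (Finset ℕ)) (i : ℕ) (A : Finset ℕ) : Finset (Finset ℕ) :=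
  insert A ((layer F (i - 1)).filter fun B => B ⊆ A)

/-- `F` is separating: every pair of distinct elements of `{1, …, n}` is
separated by some member of `F`. -/
def Separating (F : Finset (Finset ℕ)) (n : ℕ) : Prop :=
  ∀ x ∈ Finset.Icc 1 n, ∀ y ∈ Finset.Icc 1 n, x ≠ y →
    ∃ A ∈ F, (x ∈ A ∧ y ∉ A) ∨ (y ∈ A ∧ x ∉ A)

/-!
Let `C ≠ D` be two sets of level `j` contained in a set `A` of level `j + 1`. Since a layer is an
antichain, `C ∪ D` strictly contains `C`, so it survives the removal of the first `j` layers;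
minimality of `A` among the survivors then forces `A = C ∪ D`. The tents of two distinct sets of
the same level share only sets of the level below, and two such common sets would have both of the
given sets as their union.
-/

section HeightDecomposition

variable {F G : Finset (Finset ℕ)} {A B C D : Finset ℕ} {i : ℕ}

theorem mem_minimalSets_iff_minimal : A ∈ minimalSets G ↔ Minimal (· ∈ G) A := by
  simp only [minimalSets, mem_filter, minimal_iff, ne_eq, not_imp_not,
    eq_comm (a := A)]

theorem rest_subset (F : Finset (Finset ℕ)) (i : ℕ) : rest F i ⊆ F := by
  induction i with
  | zero => exact Subset.rfl
  | succ i ih => exact sdiff_subset.trans ih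

theorem layer_subset (F : Finset (Finset ℕ)) (i : ℕ) : layer F i ⊆ F := by
  cases i with
  | zero => exact empty_subset F
  | succ i => exact (filter_subset _ _).trans (rest_subset F i)

theorem minimal_of_mem_layer_succ (hA : A ∈ layer F (i + 1)) : Minimal (· ∈ rest F i) A :=
  mem_minimalSets_iff_minimal.1 hA

theorem isAntichain_layer (F : Finset (Finset ℕ)) (i : ℕ) :
    IsAntichain (· ⊆ ·) (layer F i : Set (Finset ℕ)) := by
  cases i with
  | zero => simp [layer]
  | succ i =>
    exact (setOfPred_minimal_antichain (· ∈ rest F i)).subset fun _ => minimal_of_mem_layer_succ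

theorem notMem_layer_of_mem_layer_succ (hA : A ∈ layer F (i + 1)) : A ∉ layer F i := by
  cases i with
  | zero => exact notMem_empty A
  | succ i => exact (mem_sdiff.1 (minimal_of_mem_layer_succ hA).prop).2

theorem mem_rest_of_subset (hA : A ∈ rest F i) (hAB : A ⊆ B) (hB : B ∈ F) : B ∈ rest F i := by
  induction i with
  | zero => exact hB
  | succ i ih =>
    obtain ⟨hA, hA_not_min⟩ := mem_sdiff.1 hA
    refine mem_sdiff.2 ⟨ih hA, fun hB_min => hA_not_min ?_⟩
    rwa [(mem_minimalSets_iff_minimal.1 hB_min).eq_of_le hA hAB]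

theorem mem_rest_of_mem_layer_of_ssubset (hA : A ∈ layer F i) (hAB : A ⊂ B) (hB : B ∈ F) :
    B ∈ rest F i := by
  cases i with
  | zero => exact hB
  | succ i =>
    have hA_rest : A ∈ rest F i := (minimal_of_mem_layer_succ hA).prop
    refine mem_sdiff.2 ⟨mem_rest_of_subset hA_rest hAB.subset hB, fun hB_min => ?_⟩
    exact (mem_minimalSets_iff_minimal.1 hB_min).not_prop_of_lt hAB hA_rest

theorem union_eq_of_mem_layer_succ (hA : A ∈ layer F (i + 1)) (hC : C ∈ layer F i)
    (hD : D ∈ layer F i) (hCD : C ≠ D) (hCA : C ⊆ A) (hDA : D ⊆ A) (hU : C ∪ D ∈ F) :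
    C ∪ D = A := by
  have hC_ssubset : C ⊂ C ∪ D :=
    left_lt_sup.2 (isAntichain_layer F i hD hC hCD.symm)
  have hU_rest : C ∪ D ∈ rest F i := mem_rest_of_mem_layer_of_ssubset hC hC_ssubset hU
  exact (minimal_of_mem_layer_succ hA).eq_of_le hU_rest (union_subset hCA hDA)

theorem mem_layer_of_mem_tent_inter_tent (hA : A ∈ layer F (i + 1)) (hB : B ∈ layer F (i + 1))
    (hAB : A ≠ B) (hC : C ∈ tent F (i + 1) A ∩ tent F (i + 1) B) :
    C ∈ layer F i ∧ C ⊆ A ∧ C ⊆ B := by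
  simp only [tent, Nat.add_sub_cancel, mem_inter, mem_insert, mem_filter] at hC
  obtain ⟨rfl | ⟨hC, hCA⟩, rfl | ⟨hC', hCB⟩⟩ := hC
  · exact absurd rfl hAB
  · exact absurd hC' (notMem_layer_of_mem_layer_succ hA)
  · exact absurd hC (notMem_layer_of_mem_layer_succ hB)
  · exact ⟨hC, hCA, hCB⟩

theorem tent_inter_card_le_one_general (hi : 2 ≤ i)
    (hF : ∀ C ∈ layer F (i - 1), ∀ D ∈ layer F (i - 1), C ∪ D ∈ F)
    (hA : A ∈ layer F i) (hB : B ∈ layer F i) (hAB : A ≠ B) :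
    (tent F i A ∩ tent F i B).card ≤ 1 := by
  obtain ⟨j, rfl⟩ : ∃ j, i = j + 1 := Nat.exists_eq_add_of_le' (one_le_two.trans hi)
  refine card_le_one.2 fun C hC D hD => by_contra fun hCD => hAB ?_
  obtain ⟨hC, hCA, hCB⟩ := mem_layer_of_mem_tent_inter_tent hA hB hAB hC
  obtain ⟨hD, hDA, hDB⟩ := mem_layer_of_mem_tent_inter_tent hA hB hAB hD
  have hU : C ∪ D ∈ F := hF C hC D hD
  calc A = C ∪ D := (union_eq_of_mem_layer_succ hA hC hD hCD hCA hDA hU).symm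
    _ = B := union_eq_of_mem_layer_succ hB hC hD hCD hCB hDB hU

end HeightDecomposition

/-- Two distinct sets `A, B ∈ F` of the same level `i ≥ 2` have
tents with at most one common member. -/
theorem tent_inter_card_le_one (n m i : ℕ) (F : Finset (Finset ℕ))
    (A B : Finset ℕ) (hF : IsUC F n m) (hi : 2 ≤ i)
    (hA : A ∈ layer F i) (hB : B ∈ layer F i) (hAB : A ≠ B) :
    (tent F i A ∩ tent F i B).card ≤ 1 := by
  obtain ⟨-, -, -, -, h_union⟩ := hF
  exact tent_inter_card_le_one_general hi
    (fun C hC D hD => h_union C (layer_subset F _ hC) D (layer_subset F _ hD)) hA hB hAB
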